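/- Let N ≥ 4 and i₄, …, i_N ∈ {0,1}. Consider the chain state ⊗_{n=3}^{N} |ψ⁺⟩_{R_n L_{n+1}} (with L_{N+1} := L₁), a vector on the 2(N−2) qubits R₃, L₄, R₄, …, L_N, R_N, L₁. Applying the linear functional ⊗_{n=4}^{N} ⟨1̄_{i_n}| on the qubit pairs (L_n, R_n) yields the vector 2^{−(N−2)/2}·( v_{i₄}⋯v_{i_N} · |0⟩_{R₃}⊗|1⟩_{L₁} + u_{i₄}⋯u_{i_N} · |1⟩_{R₃}⊗|0⟩_{L₁} ) on the remaining qubit pair (R₃, L₁). -/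

import Mathlib

open MeasureTheory

noncomputable def uco (u : ℝ) : Fin 2 → ℝ := ![u, Real.sqrt (1 - u ^ 2)]
noncomputable def vco (u : ℝ) : Fin 2 → ℝ := ![Real.sqrt (1 - u ^ 2), -u]

inductive Outc where
  | zero : Outc
  | one : Fin 2 → Outc
  | two : Outc
  deriving DecidableEq, Fintype

noncomputable def psiPlus : Fin 2 → Fin 2 → ℝ := fun i j =>
  if i = 0 ∧ j = 1 then (Real.sqrt 2)⁻¹ else if i = 1 ∧ j = 0 then (Real.sqrt 2)⁻¹ else 0

noncomputable def basisVec (u : ℝ) : Outc → Fin 2 → Fin 2 → ℝ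
  | Outc.zero => fun l r => if l = 0 ∧ r = 0 then 1 else 0
  | Outc.one i => fun l r => if l = 0 ∧ r = 1 then uco u i else if l = 1 ∧ r = 0 then vco u i else 0
  | Outc.two => fun l r => if l = 1 ∧ r = 1 then 1 else 0

def finNext {N : ℕ} (k : Fin N) : Fin N := ⟨(k.val + 1) % N, Nat.mod_lt _ k.pos⟩

noncomputable def ringAmp (N : ℕ) (u : ℝ) (a : Fin N → Outc) : ℝ :=
  ∑ L : Fin N → Fin 2, ∑ R : Fin N → Fin 2,
    (∏ k, basisVec u (a k) (L k) (R k)) * ∏ k, psiPlus (R k) (L (finNext k))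

noncomputable def ringP (N : ℕ) (u : ℝ) (a : Fin N → Outc) : ℝ := ringAmp N u a ^ 2

/-- The chain of `m + 1` Bell states `⊗_{n=3}^{N} |ψ⁺⟩_{R_n L_{n+1}}` (`m = N - 3`,
`L_{N+1} = L₁`) with the functionals `⟨1̄_{i_n}|` applied on the qubit pairs
`(L_n, R_n)` of the `m` inner parties `A₄, …, A_N`; the result is a vector on the
remaining qubit pair `(R₃, L₁)`.  Inner party `k : Fin m` is `A_{4+k}`, its qubits
are `x k = L_{4+k}` and `y k = R_{4+k}`; source `s : Fin (m+1)` is `S_{3+s}`. -/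
noncomputable def chainVec (m : ℕ) (u : ℝ) (i : Fin m → Fin 2) (r₃ l₁ : Fin 2) : ℝ :=
  ∑ x : Fin m → Fin 2, ∑ y : Fin m → Fin 2,
    (∏ k, basisVec u (Outc.one (i k)) (x k) (y k)) *
      ∏ s : Fin (m + 1),
        psiPlus (if hs : (s : ℕ) = 0 then r₃ else y ⟨(s : ℕ) - 1, by have := s.isLt; omega⟩)
                (if hs : (s : ℕ) < m then x ⟨(s : ℕ), hs⟩ else l₁)

/-- Splitting off the first inner party of the chain. -/
theorem chainVec_succ (m : ℕ) (u : ℝ) (i : Fin (m + 1) → Fin 2) (r l : Fin 2) :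
    chainVec (m + 1) u i r l =
      ∑ a : Fin 2, ∑ b : Fin 2, psiPlus r a * basisVec u (Outc.one (i 0)) a b *
        chainVec m u (fun k => i k.succ) b l := by
  have sum_cons (f : (Fin (m + 1) → Fin 2) → ℝ) :
      ∑ x, f x = ∑ a : Fin 2, ∑ x : Fin m → Fin 2, f (Fin.cons a x) := by
    rw [← (Fin.consEquiv (fun _ : Fin (m + 1) => Fin 2)).sum_comp, Fintype.sum_prod_type]
    rfl
  unfold chainVec
  rw [sum_cons]
  refine Finset.sum_congr rfl fun a _ => ?_
  simp_rw [sum_cons, Finset.mul_sum]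
  rw [Finset.sum_comm]
  refine Finset.sum_congr rfl fun b _ => Finset.sum_congr rfl fun x _ =>
    Finset.sum_congr rfl fun y _ => ?_
  have inner_sources (s : Fin (m + 1)) :
      (Fin.cons b y : Fin (m + 1) → Fin 2) s =
        if hs : (s : ℕ) = 0 then b else y ⟨(s : ℕ) - 1, by have := s.isLt; omega⟩ := by
    cases s using Fin.cases <;> simp
  have inner_targets (s : Fin (m + 1)) (hs : (s : ℕ) + 1 < m + 1) :
      (Fin.cons a x : Fin (m + 1) → Fin 2) ⟨(s : ℕ) + 1, hs⟩ = x ⟨s, by omega⟩ := rfl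
  rw [Fin.prod_univ_succ, Fin.prod_univ_succ (n := m + 1)]
  simp [inner_sources, inner_targets]
  ring

/-- The post-selected chain for any number of inner parties. -/
theorem chainVec_eq (m : ℕ) (u : ℝ) (i : Fin m → Fin 2) (r l : Fin 2) :
    chainVec m u i r l =
      ((Real.sqrt 2)⁻¹) ^ (m + 1) *
        (if r = 0 ∧ l = 1 then ∏ k, vco u (i k)
         else if r = 1 ∧ l = 0 then ∏ k, uco u (i k) else 0) := by
  induction m generalizing r with
  | zero => simp [chainVec, psiPlus]
  | succ m ih =>
    simp only [chainVec_succ, ih, Fin.sum_univ_two, Fin.prod_univ_succ]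
    fin_cases r <;> fin_cases l <;> simp [psiPlus, basisVec] <;> ring

/-- post-selecting the outcomes `1_{i₄},…,1_{i_N}` of the parties
`A₄,…,A_N` on the ring of Bell states leaves the (subnormalized) state
`2^{-(N-2)/2} (v_{i₄}⋯v_{i_N} |01⟩ + u_{i₄}⋯u_{i_N} |10⟩)` on the pair `(R₃, L₁)`. -/
theorem stmt_14 (N : ℕ) (hN : 4 ≤ N) (u : ℝ) (hu0 : 0 < u) (hu1 : u < 1)
    (i : Fin (N - 3) → Fin 2) (r₃ l₁ : Fin 2) :
    chainVec (N - 3) u i r₃ l₁ =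
      ((Real.sqrt 2)⁻¹) ^ (N - 2) *
        (if r₃ = 0 ∧ l₁ = 1 then ∏ k, vco u (i k)
         else if r₃ = 1 ∧ l₁ = 0 then ∏ k, uco u (i k) else 0) := by
  rw [chainVec_eq, show N - 3 + 1 = N - 2 by omega]
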